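/- arXiv:1608.07516 — 2 statements merged into one kernel-verified Lean document; each statement's English description precedes it below -/
import Mathlib

section
/- Let n ≥ 2 and f ∈ C^{2n−1}(a,b). If the Hankel matrix M_n(t,f) = (f^{(i+j−1)}(t)/(i+j−1)!)_{ij} is positive semi-definite for every t ∈ (a,b), then f is matrix monotone of order n on (a,b): for all n×n Hermitian matrices A ≤ B with spectra in (a,b), f(A) ≤ f(B). -/
open Set Matrix
open scoped ComplexOrder

/-!
For a polynomial `q` of degree `< n`, the derivative of order `2n - 1` of `f q²` at `t`, divided by
`(2n - 1)!`, is the quadratic form of `M_n(t,f)` at the Taylor coefficients of `q` at `t`, taken in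
reverse order. By the mean value theorem for divided differences, the Hankel condition therefore
makes the divided difference `∑ₖ f(zₖ) q(zₖ)² / ∏_{j ≠ k} (zₖ - zⱼ)` nonnegative for any `2n`
distinct nodes `zₖ` of the interval.

Let `B = A + x x*` and fix a vector `w`. By Cramer's rule,
`det (t - B) ⟨w, ((t - B)⁻¹ - (t - A)⁻¹) w⟩ = det (t - A) |⟨x, (t - A)⁻¹ w⟩|²`, so the rational
function `⟨w, ((t - B)⁻¹ - (t - A)⁻¹) w⟩` has numerator `q² + r²` over the common denominator
`det (t - A) det (t - B)`, where `q` and `r` are real polynomials of degree `< n`. If the `2n`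
eigenvalues of `A` and `B` are distinct, comparing residues at them exhibits
`⟨w, (f(B) - f(A)) w⟩` as the sum of the nonnegative divided differences of `f q²` and `f r²`.

The eigenvalues are distinct as soon as no eigenvector of `A` is orthogonal to `x`, which holds for
a dense set of pairs `(A, x)`, so `f(A) ≤ f(A + x x*)` for all `x` by continuity. A general
`B - A ≥ 0` is a sum of matrices `x x*`, and the spectra of the intermediate matrices stay between
the least eigenvalue of `A` and the greatest eigenvalue of `B`.
-/

section DividedDifference

open Polynomial

theorem iteratedDerivWithin_polynomial_eval {𝕜 : Type*} [NontriviallyNormedField 𝕜] (P : 𝕜[X])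
    (k : ℕ) {s : Set 𝕜} (hs : UniqueDiffOn 𝕜 s) {t : 𝕜} (ht : t ∈ s) :
    iteratedDerivWithin k P.eval s t = (derivative^[k] P).eval t := by
  induction k generalizing t with
  | zero => simp
  | succ k ih =>
    rw [iteratedDerivWithin_succ, derivWithin_congr (fun x hx => ih hx) (ih ht),
      (derivative^[k] P).derivWithin (hs t ht), Function.iterate_succ_apply']

theorem exists_iteratedDerivWithin_eq_zero {s : Set ℝ} (hs : IsOpen s) [s.OrdConnected] (m : ℕ)
    {h : ℝ → ℝ} (hh : ContDiffOn ℝ m h s) {x : Fin (m + 1) → ℝ} (hx : StrictMono x)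
    (hxs : ∀ i, x i ∈ s) (h0 : ∀ i, h (x i) = 0) :
    ∃ ξ ∈ s, iteratedDerivWithin m h s ξ = 0 := by
  induction m generalizing h with
  | zero => exact ⟨x 0, hxs 0, by simpa using h0 0⟩
  | succ m ih =>
    have hIcc (i : Fin (m + 1)) : Icc (x i.castSucc) (x i.succ) ⊆ s :=
      s.Icc_subset (hxs i.castSucc) (hxs i.succ)
    have rolle (i : Fin (m + 1)) : ∃ c ∈ Ioo (x i.castSucc) (x i.succ), deriv h c = 0 :=
      exists_deriv_eq_zero (hx i.castSucc_lt_succ) (hh.continuousOn.mono (hIcc i))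
        (by rw [h0, h0])
    choose c hc hc0 using rolle
    have hcs (i : Fin (m + 1)) : c i ∈ s := hIcc i (Ioo_subset_Icc_self (hc i))
    have hc_mono : StrictMono c := fun i j hij =>
      calc c i < x i.succ := (hc i).2
        _ ≤ x j.castSucc := hx.monotone (Fin.succ_le_castSucc_iff.mpr hij)
        _ < c j := (hc j).1
    rw [iteratedDerivWithin_succ']
    exact ih (hh.derivWithin hs.uniqueDiffOn (by norm_cast)) hc_mono hcs
      fun i => by rw [derivWithin_of_isOpen hs (hcs i), hc0]

theorem eval_iterate_derivative_eq_factorial_mul_sum {K ι : Type*} [Field K] [Fintype ι]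
    [DecidableEq ι] {m : ℕ} (hm : Fintype.card ι = m + 1) {x : ι → K} (hx : Function.Injective x)
    {P : K[X]} (hP : P.degree < Fintype.card ι) (t : K) :
    (derivative^[m] P).eval t =
      m.factorial * ∑ i, P.eval (x i) / ∏ j ∈ Finset.univ.erase i, (x i - x j) := by
  have h := Lagrange.eval_iterate_derivative_eq_sum (s := Finset.univ) hx.injOn hP (k := m)
    (by simp [hm]) t
  simpa [hm] using h

theorem contDiff_polynomial_eval {𝕜 : Type*} [NontriviallyNormedField 𝕜] (P : 𝕜[X])
    (m : WithTop ℕ∞) : ContDiff 𝕜 m P.eval := by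
  simpa using P.contDiff_aeval (𝕜 := 𝕜) m

theorem exists_sum_div_prod_eq_iteratedDerivWithin {ι : Type*} [Fintype ι] [DecidableEq ι]
    {s : Set ℝ} (hs : IsOpen s) [s.OrdConnected] {m : ℕ} (hm : Fintype.card ι = m + 1) {g : ℝ → ℝ}
    (hg : ContDiffOn ℝ m g s) {x : ι → ℝ} (hx : Function.Injective x) (hxs : ∀ i, x i ∈ s) :
    ∃ ξ ∈ s, ∑ i, g (x i) / ∏ j ∈ Finset.univ.erase i, (x i - x j) =
      iteratedDerivWithin m g s ξ / m.factorial := by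
  let P : ℝ[X] := Lagrange.interpolate Finset.univ x fun i => g (x i)
  have hdeg : P.degree < Fintype.card ι := Lagrange.degree_interpolate_lt _ hx.injOn
  have heval (i : ι) : P.eval (x i) = g (x i) :=
    Lagrange.eval_interpolate_at_node _ hx.injOn (Finset.mem_univ i)
  have hP : ContDiffOn ℝ m P.eval s := (contDiff_polynomial_eval P m).contDiffOn
  let e := (Finset.univ.image x).orderEmbOfFin
    (by rw [Finset.card_image_of_injective _ hx, Finset.card_univ, hm])
  have he (k : Fin (m + 1)) : ∃ i, x i = e k := by
    simpa using (Finset.univ.image x).orderEmbOfFin_mem _ k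
  obtain ⟨ξ, hξ, hξ0⟩ := exists_iteratedDerivWithin_eq_zero (h := g - P.eval) hs m (hg.sub hP)
    e.strictMono (fun k => by obtain ⟨i, hi⟩ := he k; exact hi ▸ hxs i)
    (fun k => by obtain ⟨i, hi⟩ := he k; simp [← hi, heval])
  refine ⟨ξ, hξ, ?_⟩
  rw [iteratedDerivWithin_sub hξ hs.uniqueDiffOn (hg ξ hξ) (hP ξ hξ),
    iteratedDerivWithin_polynomial_eval P m hs.uniqueDiffOn hξ, sub_eq_zero,
    eval_iterate_derivative_eq_factorial_mul_sum hm hx hdeg] at hξ0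
  simp only [heval] at hξ0
  rw [hξ0, mul_div_cancel_left₀ _ (by positivity)]

end DividedDifference

section HankelForm

open Polynomial

theorem iteratedDerivWithin_sub_pow {𝕜 : Type*} [NontriviallyNormedField 𝕜] {s : Set 𝕜} {t : 𝕜}
    (m k : ℕ) (hs : UniqueDiffOn 𝕜 s) (ht : t ∈ s) :
    iteratedDerivWithin k (fun x => (x - t) ^ m) s t = if k = m then (m.factorial : 𝕜) else 0 := by
  have h := iteratedDerivWithin_polynomial_eval ((X - C t) ^ m) k hs ht
  simp only [eval_pow, eval_sub, eval_X, eval_C, iterate_derivative_X_sub_pow, eval_smul,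
    sub_self] at h
  rw [h]
  split_ifs with hkm
  · simp [hkm, Nat.descFactorial_self]
  · obtain hlt | hgt := lt_or_gt_of_ne hkm
    · simp [Nat.sub_ne_zero_of_lt hlt]
    · simp [Nat.descFactorial_of_lt hgt]

theorem iteratedDerivWithin_mul_sub_pow_div_factorial {𝕜 : Type*} [NontriviallyNormedField 𝕜]
    [CharZero 𝕜] {f : 𝕜 → 𝕜} {s : Set 𝕜} {t : 𝕜} {N m : ℕ} (hmN : m ≤ N) (hs : UniqueDiffOn 𝕜 s)
    (ht : t ∈ s) (hf : ContDiffWithinAt 𝕜 N f s t) :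
    iteratedDerivWithin N (fun x => f x * (x - t) ^ m) s t / N.factorial =
      iteratedDerivWithin (N - m) f s t / (N - m).factorial := by
  have leibniz := iteratedDerivWithin_mul (g := fun x => (x - t) ^ m) ht hs hf (by fun_prop)
  rw [Finset.sum_eq_single_of_mem (N - m) (by simp), iteratedDerivWithin_sub_pow _ _ hs ht,
    if_pos (by lia)] at leibniz
  · rw [show (fun x => f x * (x - t) ^ m) = f * fun x => (x - t) ^ m from rfl, leibniz,
      Nat.choose_symm hmN, Nat.cast_choose 𝕜 hmN]
    have hfact (k : ℕ) : (k.factorial : 𝕜) ≠ 0 := Nat.cast_ne_zero.mpr k.factorial_ne_zero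
    have := hfact N
    have := hfact m
    field_simp
  · intro k hk hkm
    have := Finset.mem_range.mp hk
    rw [iteratedDerivWithin_sub_pow _ _ hs ht, if_neg (by lia), mul_zero]

variable {f : ℝ → ℝ} {s : Set ℝ} {t : ℝ}

/-- The Hankel matrix `M_n(t,f)`, with entries indexed from `0` and derivatives taken within
`s`. -/
noncomputable def hankelMatrix (n : ℕ) (f : ℝ → ℝ) (s : Set ℝ) (t : ℝ) :
    Matrix (Fin n) (Fin n) ℝ :=
  .of fun i j => iteratedDerivWithin (i.val + j.val + 1) f s t / (i.val + j.val + 1).factorial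

theorem iteratedDerivWithin_mul_sq_sum_div_factorial {n : ℕ} (hs : UniqueDiffOn ℝ s)
    (ht : t ∈ s) (hf : ContDiffWithinAt ℝ (2 * n - 1 : ℕ) f s t) (c : Fin n → ℝ) :
    iteratedDerivWithin (2 * n - 1) (fun x => f x * (∑ i, c i * (x - t) ^ i.rev.val) ^ 2) s t /
      (2 * n - 1).factorial = c ⬝ᵥ (hankelMatrix n f s t *ᵥ c) := by
  have expand (x : ℝ) : f x * (∑ i, c i * (x - t) ^ i.rev.val) ^ 2 =
      ∑ i, ∑ j, (c i * c j) * (f x * (x - t) ^ (i.rev.val + j.rev.val)) := by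
    rw [sq, Finset.sum_mul_sum, Finset.mul_sum]
    refine Finset.sum_congr rfl fun i _ => ?_
    rw [Finset.mul_sum]
    exact Finset.sum_congr rfl fun j _ => by ring
  have smooth (k : ℕ) : ContDiffWithinAt ℝ (2 * n - 1 : ℕ) (fun x => f x * (x - t) ^ k) s t :=
    hf.mul (by fun_prop)
  have term (i j : Fin n) : iteratedDerivWithin (2 * n - 1)
      (fun x => (c i * c j) * (f x * (x - t) ^ (i.rev.val + j.rev.val))) s t /
        (2 * n - 1).factorial = c i * (hankelMatrix n f s t i j * c j) := by
    rw [iteratedDerivWithin_const_mul ht hs _ (smooth _), mul_div_assoc,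
      iteratedDerivWithin_mul_sub_pow_div_factorial (by grind) hs ht hf,
      show 2 * n - 1 - (i.rev.val + j.rev.val) = i.val + j.val + 1 by grind,
      hankelMatrix, of_apply]
    ring
  simp only [expand, dotProduct, mulVec, Finset.mul_sum, ← term]
  rw [iteratedDerivWithin_fun_sum ht hs fun i _ =>
    .sum fun j _ => contDiffWithinAt_const.mul (smooth _), Finset.sum_div]
  refine Finset.sum_congr rfl fun i _ => ?_
  rw [iteratedDerivWithin_fun_sum ht hs fun j _ => contDiffWithinAt_const.mul (smooth _),
    Finset.sum_div]

theorem eval_eq_sum_coeff_taylor_mul_sub_pow {R : Type*} [CommRing R] {n : ℕ} {q : R[X]}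
    (hq : q.degree < n) (t x : R) :
    q.eval x = ∑ i : Fin n, (taylor t q).coeff i * (x - t) ^ i.val := by
  rw [← taylor_eval_sub t, eval_eq_sum]
  exact (sum_fin (fun i a => a * (x - t) ^ i) (by simp) (by rwa [degree_taylor])).symm

theorem sum_mul_sq_eval_div_prod_nonneg {κ : Type*} [Fintype κ] [DecidableEq κ] {n : ℕ}
    (hκ : Fintype.card κ = 2 * n) (hs : IsOpen s) [s.OrdConnected]
    (hf : ContDiffOn ℝ (2 * n - 1 : ℕ) f s) (hM : ∀ t ∈ s, (hankelMatrix n f s t).PosSemidef)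
    {q : ℝ[X]} (hq : q.degree < n) {x : κ → ℝ} (hx : Function.Injective x) (hxs : ∀ k, x k ∈ s) :
    0 ≤ ∑ k, f (x k) * q.eval (x k) ^ 2 / ∏ j ∈ Finset.univ.erase k, (x k - x j) := by
  obtain rfl | hn := n.eq_zero_or_pos
  · have : IsEmpty κ := Fintype.card_eq_zero_iff.mp hκ
    simp
  obtain ⟨ξ, hξ, hξq⟩ := exists_sum_div_prod_eq_iteratedDerivWithin (m := 2 * n - 1) hs (by lia)
    (hf.mul ((contDiff_polynomial_eval q _).pow 2).contDiffOn) hx hxs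
  have heval (y : ℝ) : q.eval y =
      ∑ i : Fin n, (taylor ξ q).coeff i.rev * (y - ξ) ^ i.rev.val := by
    rw [eval_eq_sum_coeff_taylor_mul_sub_pow hq ξ]
    exact (Equiv.sum_comp Fin.revPerm _).symm
  rw [hξq]
  simp only [heval]
  rw [iteratedDerivWithin_mul_sq_sum_div_factorial hs.uniqueDiffOn hξ (hf ξ hξ)]
  simpa only [star_trivial] using (hM ξ hξ).dotProduct_mulVec_nonneg _

end HankelForm

section PartialFraction

open Polynomial

variable {ι : Type*} [Fintype ι] [DecidableEq ι]

/-- The numerator of the partial fraction sum `∑ i, c i / (X - v i)` over the common denominator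
`∏ i, (X - v i)`. -/
noncomputable def partialFractionNumerator {R : Type*} [CommRing R] (v c : ι → R) : R[X] :=
  ∑ i, c i • Lagrange.nodal (Finset.univ.erase i) v

theorem degree_partialFractionNumerator_lt {R : Type*} [CommRing R] [Nontrivial R] (v c : ι → R) :
    (partialFractionNumerator v c).degree < Fintype.card ι := by
  rw [← mem_degreeLT]
  refine sum_mem fun i _ => Submodule.smul_mem _ _ (mem_degreeLT.mpr ?_)
  rw [Lagrange.degree_nodal]
  exact_mod_cast Finset.card_erase_lt_of_mem (Finset.mem_univ i)

theorem eval_partialFractionNumerator_node {R : Type*} [CommRing R] (v c : ι → R) (i : ι) :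
    (partialFractionNumerator v c).eval (v i) = c i * ∏ j ∈ Finset.univ.erase i, (v i - v j) := by
  rw [partialFractionNumerator, eval_finsetSum, Finset.sum_eq_single_of_mem i (Finset.mem_univ i)]
  · rw [eval_smul, Lagrange.eval_nodal, smul_eq_mul]
  · intro j _ hji
    rw [eval_smul, Lagrange.eval_nodal_at_node (by simpa using hji.symm), smul_zero]

theorem eval_partialFractionNumerator_of_forall_ne {K : Type*} [Field K] {v : ι → K} (c : ι → K)
    {t : K} (ht : ∀ i, t ≠ v i) :
    (partialFractionNumerator v c).eval t = (∏ i, (t - v i)) * ∑ i, c i / (t - v i) := by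
  rw [partialFractionNumerator, eval_finsetSum, Finset.mul_sum]
  refine Finset.sum_congr rfl fun i _ => ?_
  rw [eval_smul, Lagrange.eval_nodal, smul_eq_mul, ← Finset.mul_prod_erase _ _ (Finset.mem_univ i)]
  have := sub_ne_zero.mpr (ht i)
  field_simp

theorem sum_mul_nonneg_of_partialFractionNumerator_eq_sq_add_sq {n : ℕ}
    (hι : Fintype.card ι = 2 * n) {f : ℝ → ℝ} {s : Set ℝ} (hs : IsOpen s) [s.OrdConnected]
    (hf : ContDiffOn ℝ (2 * n - 1 : ℕ) f s) (hM : ∀ t ∈ s, (hankelMatrix n f s t).PosSemidef)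
    {z γ : ι → ℝ} (hz : Function.Injective z) (hzs : ∀ k, z k ∈ s) {q r : ℝ[X]}
    (hq : q.degree < n) (hr : r.degree < n) (hγ : partialFractionNumerator z γ = q ^ 2 + r ^ 2) :
    0 ≤ ∑ k, γ k * f (z k) := by
  have residue (k : ι) : γ k * f (z k) =
      f (z k) * q.eval (z k) ^ 2 / (∏ j ∈ Finset.univ.erase k, (z k - z j)) +
        f (z k) * r.eval (z k) ^ 2 / ∏ j ∈ Finset.univ.erase k, (z k - z j) := by
    have hne : ∏ j ∈ Finset.univ.erase k, (z k - z j) ≠ 0 :=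
      Finset.prod_ne_zero_iff.mpr fun j hj =>
        sub_ne_zero.mpr (hz.ne (Finset.ne_of_mem_erase hj).symm)
    have hk := eval_partialFractionNumerator_node z γ k
    rw [hγ, eval_add, eval_pow, eval_pow] at hk
    rw [← add_div, ← mul_add, hk]
    field_simp
  rw [Finset.sum_congr rfl fun k _ => residue k, Finset.sum_add_distrib]
  exact add_nonneg (sum_mul_sq_eval_div_prod_nonneg hι hs hf hM hq hz hzs)
    (sum_mul_sq_eval_div_prod_nonneg hι hs hf hM hr hz hzs)

end PartialFraction

section RankOne

open Polynomial

theorem det_smul_inv_add_vecMulVec_sub_inv {K ι : Type*} [Field K] [Fintype ι] [DecidableEq ι]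
    {M : Matrix ι ι K} {u v : ι → K} (hM : IsUnit M.det) (hN : IsUnit (M + vecMulVec u v).det) :
    (M + vecMulVec u v).det • ((M + vecMulVec u v)⁻¹ - M⁻¹) =
      -(M.det • vecMulVec (M⁻¹ *ᵥ u) (v ᵥ* M⁻¹)) := by
  set N := M + vecMulVec u v with hNdef
  have hdet : N.det = M.det * (1 + v ⬝ᵥ (M⁻¹ *ᵥ u)) := by
    rw [hNdef, vecMulVec_eq Unit, det_add_replicateCol_mul_replicateRow hM, Matrix.mul_assoc,
      ← replicateCol_mulVec, det_unique (n := Unit)]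
    simp [replicateRow_mul_replicateCol_apply]
  have hNu : N *ᵥ (M⁻¹ *ᵥ u) = (1 + v ⬝ᵥ (M⁻¹ *ᵥ u)) • u := by
    rw [hNdef, add_mulVec, mulVec_mulVec, mul_nonsing_inv _ hM, one_mulVec, vecMulVec_mulVec,
      add_smul, one_smul, op_smul_eq_smul]
  have cramer_eq : N.det • (N⁻¹ *ᵥ u) = M.det • (M⁻¹ *ᵥ u) := by
    rw [hdet, mul_smul, ← mulVec_smul, ← hNu, mulVec_mulVec, nonsing_inv_mul _ hN, one_mulVec]
  calc N.det • (N⁻¹ - M⁻¹) = N.det • (N⁻¹ * (M - N) * M⁻¹) := by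
        rw [mul_sub, sub_mul, nonsing_inv_mul _ hN, one_mul, mul_assoc, mul_nonsing_inv _ hM,
          mul_one]
    _ = -vecMulVec (N.det • (N⁻¹ *ᵥ u)) (v ᵥ* M⁻¹) := by
        rw [hNdef, sub_add_cancel_left, mul_neg, neg_mul, mul_vecMulVec, vecMulVec_mul, smul_neg,
          smul_vecMulVec]
    _ = -(M.det • vecMulVec (M⁻¹ *ᵥ u) (v ᵥ* M⁻¹)) := by rw [cramer_eq, smul_vecMulVec]

variable {𝕜 ι : Type*} [RCLike 𝕜] [Fintype ι] [DecidableEq ι] {A : Matrix ι ι 𝕜}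

/-- The coordinates of `x` in the orthonormal eigenbasis of `A`. -/
noncomputable def eigenCoord (hA : A.IsHermitian) (x : ι → 𝕜) : ι → 𝕜 :=
  star (hA.eigenvectorUnitary : Matrix ι ι 𝕜) *ᵥ x

theorem dotProduct_cfc_mulVec (hA : A.IsHermitian) (f : ℝ → ℝ) (x w : ι → 𝕜) :
    star x ⬝ᵥ (cfc f A *ᵥ w) =
      ∑ i, (f (hA.eigenvalues i) : 𝕜) * (star (eigenCoord hA x i) * eigenCoord hA w i) := by
  rw [hA.cfc_eq, IsHermitian.cfc, Unitary.conjStarAlgAut_apply, ← mulVec_mulVec, ← mulVec_mulVec,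
    dotProduct_mulVec, show star x ᵥ* _ = star (eigenCoord hA x) by
      rw [eigenCoord, star_mulVec, star_eq_conjTranspose, conjTranspose_conjTranspose]]
  refine Finset.sum_congr rfl fun i _ => ?_
  rw [mulVec_diagonal]
  exact mul_left_comm _ _ _

theorem dotProduct_cfc_mulVec_self (hA : A.IsHermitian) (f : ℝ → ℝ) (w : ι → 𝕜) :
    star w ⬝ᵥ (cfc f A *ᵥ w) = (∑ i, f (hA.eigenvalues i) * ‖eigenCoord hA w i‖ ^ 2 : ℝ) := by
  rw [dotProduct_cfc_mulVec hA]
  push_cast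
  simp only [RCLike.star_def, RCLike.conj_mul]

theorem cfc_inv_sub (hA : A.IsHermitian) {t : ℝ} (ht : t ∉ spectrum ℝ A) :
    cfc (fun r => (t - r)⁻¹) A = (algebraMap ℝ _ t - A)⁻¹ := by
  rw [cfc_inv _ A (fun r hr => sub_ne_zero.mpr (ne_of_mem_of_not_mem hr ht).symm)
    (by fun_prop) hA.isSelfAdjoint, cfc_sub _ _ A, cfc_const t A hA.isSelfAdjoint,
    cfc_id' ℝ A hA.isSelfAdjoint, nonsing_inv_eq_ringInverse]

theorem det_algebraMap_sub (hA : A.IsHermitian) (t : ℝ) :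
    (algebraMap ℝ (Matrix ι ι 𝕜) t - A).det = (∏ i, (t - hA.eigenvalues i) : ℝ) := by
  have h := congrArg (Polynomial.eval (t : 𝕜)) hA.charpoly_eq
  rw [eval_charpoly, eval_prod] at h
  push_cast
  simpa [algebraMap_eq_diagonal, Pi.algebraMap_def] using h

theorem prod_mul_sum_inv_sub_sum_inv_eq {x : ι → 𝕜} (hA : A.IsHermitian)
    (hB : (A + vecMulVec x (star x)).IsHermitian) (w : ι → 𝕜) {t : ℝ}
    (htA : t ∉ spectrum ℝ A) (htB : t ∉ spectrum ℝ (A + vecMulVec x (star x))) :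
    (∏ i, (t - hB.eigenvalues i)) *
        (∑ i, (t - hB.eigenvalues i)⁻¹ * ‖eigenCoord hB w i‖ ^ 2 -
          ∑ i, (t - hA.eigenvalues i)⁻¹ * ‖eigenCoord hA w i‖ ^ 2) =
      (∏ i, (t - hA.eigenvalues i)) * ‖∑ i, ((t - hA.eigenvalues i)⁻¹ : ℝ) *
        (star (eigenCoord hA x i) * eigenCoord hA w i)‖ ^ 2 := by
  have hN : algebraMap ℝ _ t - A + vecMulVec (-x) (star x) =
      algebraMap ℝ _ t - (A + vecMulVec x (star x)) := by
    rw [neg_vecMulVec, sub_add_eq_sub_sub, sub_eq_add_neg _ (vecMulVec _ _)]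
  have hdetA := (isUnit_iff_isUnit_det _).mp (spectrum.notMem_iff.mp htA)
  have hdetB := (isUnit_iff_isUnit_det _).mp (spectrum.notMem_iff.mp htB)
  have resolvent := congrArg (fun C => star w ⬝ᵥ (C *ᵥ w))
    (det_smul_inv_add_vecMulVec_sub_inv (u := -x) (v := star x) hdetA (by rwa [hN]))
  simp only [hN, ← cfc_inv_sub hA htA, ← cfc_inv_sub hB htB, det_algebraMap_sub hA,
    det_algebraMap_sub hB, smul_mulVec, sub_mulVec, neg_mulVec, vecMulVec_mulVec, mulVec_neg,
    dotProduct_smul, dotProduct_sub, ← dotProduct_mulVec,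
    dotProduct_cfc_mulVec_self hA, dotProduct_cfc_mulVec_self hB, smul_neg, neg_neg,
    op_smul_eq_smul, smul_eq_mul] at resolvent
  have hwx : star w ⬝ᵥ (cfc (fun r => (t - r)⁻¹) A *ᵥ x) =
      star (star x ⬝ᵥ (cfc (fun r => (t - r)⁻¹) A *ᵥ w)) := by
    rw [dotProduct_cfc_mulVec hA, dotProduct_cfc_mulVec hA, star_sum]
    exact Finset.sum_congr rfl fun i _ => by simp [mul_comm]
  rw [hwx, RCLike.star_def, RCLike.mul_conj, dotProduct_cfc_mulVec hA] at resolvent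
  exact_mod_cast resolvent

theorem partialFractionNumerator_sumElim_eigenvalues {x : ι → 𝕜} (hA : A.IsHermitian)
    (hB : (A + vecMulVec x (star x)).IsHermitian) (w : ι → 𝕜) :
    partialFractionNumerator (Sum.elim hA.eigenvalues hB.eigenvalues)
        (Sum.elim (fun i => -‖eigenCoord hA w i‖ ^ 2) fun i => ‖eigenCoord hB w i‖ ^ 2) =
      partialFractionNumerator hA.eigenvalues
          (fun i => RCLike.re (star (eigenCoord hA x i) * eigenCoord hA w i)) ^ 2 +
        partialFractionNumerator hA.eigenvalues
          (fun i => RCLike.im (star (eigenCoord hA x i) * eigenCoord hA w i)) ^ 2 := by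
  have hfin : (spectrum ℝ A ∪ spectrum ℝ (A + vecMulVec x (star x))).Finite :=
    finite_real_spectrum.union finite_real_spectrum
  refine eq_of_infinite_eval_eq _ _ (hfin.infinite_compl.mono fun t ht => ?_)
  rw [mem_compl_iff, mem_union, not_or] at ht
  have rank_one := prod_mul_sum_inv_sub_sum_inv_eq hA hB w ht.1 ht.2
  rw [hA.spectrum_real_eq_range_eigenvalues, hB.spectrum_real_eq_range_eigenvalues] at ht
  have htA (i : ι) : t ≠ hA.eigenvalues i := fun h => ht.1 ⟨i, h.symm⟩
  have htB (i : ι) : t ≠ hB.eigenvalues i := fun h => ht.2 ⟨i, h.symm⟩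
  have htAB (k : ι ⊕ ι) : t ≠ Sum.elim hA.eigenvalues hB.eigenvalues k := by
    rcases k with i | i
    exacts [htA i, htB i]
  rw [mem_ofPred_eq, eval_add, eval_pow, eval_pow,
    eval_partialFractionNumerator_of_forall_ne _ htAB,
    eval_partialFractionNumerator_of_forall_ne _ htA,
    eval_partialFractionNumerator_of_forall_ne _ htA]
  simp only [Fintype.prod_sum_type, Fintype.sum_sum_type, Sum.elim_inl, Sum.elim_inr]
  rw [← RCLike.normSq_eq_def', RCLike.normSq_apply] at rank_one
  simp only [map_sum, RCLike.re_ofReal_mul, RCLike.im_ofReal_mul] at rank_one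
  simp only [div_eq_inv_mul, mul_neg, Finset.sum_neg_distrib]
  linear_combination (∏ i, (t - hA.eigenvalues i)) * rank_one

open scoped MatrixOrder in
theorem cfc_le_cfc_add_vecMulVec_of_injective {f : ℝ → ℝ} {s : Set ℝ} (hs : IsOpen s)
    [s.OrdConnected] (hf : ContDiffOn ℝ (2 * Fintype.card ι - 1 : ℕ) f s)
    (hM : ∀ t ∈ s, (hankelMatrix (Fintype.card ι) f s t).PosSemidef) {x : ι → 𝕜}
    (hA : A.IsHermitian) (hB : (A + vecMulVec x (star x)).IsHermitian)
    (hAB : Function.Injective (Sum.elim hA.eigenvalues hB.eigenvalues))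
    (hAs : spectrum ℝ A ⊆ s) (hBs : spectrum ℝ (A + vecMulVec x (star x)) ⊆ s) :
    cfc f A ≤ cfc f (A + vecMulVec x (star x)) := by
  rw [hA.spectrum_real_eq_range_eigenvalues, range_subset_iff] at hAs
  rw [hB.spectrum_real_eq_range_eigenvalues, range_subset_iff] at hBs
  rw [Matrix.le_iff]
  refine .of_dotProduct_mulVec_nonneg
    (IsHermitian.sub (cfc_predicate f _) (cfc_predicate f _)) fun w => ?_
  have nonneg := sum_mul_nonneg_of_partialFractionNumerator_eq_sq_add_sq
    (by rw [Fintype.card_sum, two_mul]) hs hf hM hAB (Sum.forall.mpr ⟨hAs, hBs⟩)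
    (degree_partialFractionNumerator_lt _ _) (degree_partialFractionNumerator_lt _ _)
    (partialFractionNumerator_sumElim_eigenvalues hA hB w)
  rw [sub_mulVec, dotProduct_sub, dotProduct_cfc_mulVec_self hA, dotProduct_cfc_mulVec_self hB,
    ← RCLike.ofReal_sub, RCLike.ofReal_nonneg]
  simpa [neg_add_eq_sub, mul_comm] using nonneg

end RankOne

section Observable

variable {𝕜 ι : Type*} [RCLike 𝕜] [Fintype ι] {A : Matrix ι ι 𝕜} {x : ι → 𝕜}

/-- The pair `(A, x)` is observable, in the form of the Hautus test: no eigenvector of `A` is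
orthogonal to `x`. For Hermitian `A` this says that `x` is a cyclic vector of `A`. -/
def IsObservable (A : Matrix ι ι 𝕜) (x : ι → 𝕜) : Prop :=
  ∀ (y : ι → 𝕜) (c : 𝕜), A *ᵥ y = c • y → star x ⬝ᵥ y = 0 → y = 0

theorem ofLp_eigenvectorBasis_ne_zero [DecidableEq ι] (hA : A.IsHermitian) (i : ι) :
    (hA.eigenvectorBasis i).ofLp ≠ 0 := by
  simpa using hA.eigenvectorBasis.toBasis.ne_zero i

namespace IsObservable

theorem add_vecMulVec (h : IsObservable A x) : IsObservable (A + vecMulVec x (star x)) x := by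
  intro y c hy hxy
  refine h y c ?_ hxy
  rw [← hy, add_mulVec, vecMulVec_mulVec, hxy, MulOpposite.op_zero, zero_smul, add_zero]

theorem conj [DecidableEq ι] (h : IsObservable A x) (U : unitaryGroup ι 𝕜) :
    IsObservable ((U : Matrix ι ι 𝕜) * A * star (U : Matrix ι ι 𝕜)) ((U : Matrix ι ι 𝕜) *ᵥ x) := by
  intro y c hy hxy
  have hUy : star (U : Matrix ι ι 𝕜) *ᵥ y = 0 := by
    refine h _ c ?_ ?_
    · rw [← mulVec_smul, ← hy, mulVec_mulVec, mulVec_mulVec, ← mul_assoc, ← mul_assoc,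
        Unitary.coe_star_mul_self, one_mul]
    · rwa [dotProduct_mulVec, star_eq_conjTranspose, ← star_mulVec]
  calc y = (U : Matrix ι ι 𝕜) *ᵥ (star (U : Matrix ι ι 𝕜) *ᵥ y) := by
        rw [mulVec_mulVec, Unitary.mul_star_self_of_mem U.2, one_mulVec]
    _ = 0 := by rw [hUy, mulVec_zero]

variable [DecidableEq ι]

theorem injective_eigenvalues (h : IsObservable A x) (hA : A.IsHermitian) :
    Function.Injective hA.eigenvalues := by
  intro i j hij
  by_contra hne
  have hi := hA.mulVec_eigenvectorBasis i
  have hj := hA.mulVec_eigenvectorBasis j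
  rw [RCLike.real_smul_eq_coe_smul (K := 𝕜)] at hi hj
  rw [hij] at hi
  have combination := h ((star x ⬝ᵥ (hA.eigenvectorBasis j).ofLp) • (hA.eigenvectorBasis i).ofLp -
      (star x ⬝ᵥ (hA.eigenvectorBasis i).ofLp) • (hA.eigenvectorBasis j).ofLp) (hA.eigenvalues j)
    (by simp only [mulVec_sub, mulVec_smul, hi, hj, smul_sub, smul_comm (hA.eigenvalues j : 𝕜)])
    (by simp only [dotProduct_sub, dotProduct_smul, smul_eq_mul, mul_comm, sub_self])
  have coord := congrFun
    (congrArg (star (hA.eigenvectorUnitary : Matrix ι ι 𝕜) *ᵥ ·) combination) i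
  have hxj : star x ⬝ᵥ (hA.eigenvectorBasis j).ofLp = 0 := by
    simpa [mulVec_sub, mulVec_smul, hA.star_eigenvectorUnitary_mulVec, hne] using coord
  exact ofLp_eigenvectorBasis_ne_zero hA j (h _ _ hj hxj)

theorem eigenvalues_ne_eigenvalues (h : IsObservable A x) (hA : A.IsHermitian)
    (hB : (A + vecMulVec x (star x)).IsHermitian) (i j : ι) :
    hA.eigenvalues i ≠ hB.eigenvalues j := by
  intro hij
  have hi := hA.mulVec_eigenvectorBasis i
  have hj := hB.mulVec_eigenvectorBasis j
  have hi0 := ofLp_eigenvectorBasis_ne_zero hA i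
  have hj0 := ofLp_eigenvectorBasis_ne_zero hB j
  rw [hij] at hi
  rw [RCLike.real_smul_eq_coe_smul (K := 𝕜)] at hi hj
  generalize (hA.eigenvectorBasis i).ofLp = y at *
  generalize (hB.eigenvectorBasis j).ofLp = z at *
  generalize hB.eigenvalues j = c at *
  have hyz : star y ⬝ᵥ (A *ᵥ z) = c * (star y ⬝ᵥ z) := by
    rw [dotProduct_mulVec, ← hA.eq, ← star_mulVec, hi, star_smul, smul_dotProduct]
    simp
  have hzy : star y ⬝ᵥ (A *ᵥ z) + (star y ⬝ᵥ x) * (star x ⬝ᵥ z) = c * (star y ⬝ᵥ z) := by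
    simpa [add_mulVec, dotProduct_add, vecMulVec_mulVec, RCLike.real_smul_eq_coe_mul,
      mul_comm] using congrArg (star y ⬝ᵥ ·) hj
  rw [hyz, add_eq_left, mul_eq_zero] at hzy
  rcases hzy with hyx | hxz
  · exact hi0 (h y c hi (by rw [← star_eq_zero, ← hyx, star_dotProduct, star_star]))
  · exact hj0 (h.add_vecMulVec z c hj hxz)

end IsObservable

theorem isObservable_diagonal [DecidableEq ι] {d : ι → 𝕜} (hd : Function.Injective d)
    (hx : ∀ i, x i ≠ 0) : IsObservable (diagonal d) x := by
  intro y c hy hxy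
  have eigen (k : ι) (hk : y k ≠ 0) : d k = c :=
    mul_right_cancel₀ hk (by simpa [mulVec_diagonal] using congrFun hy k)
  by_contra hne
  obtain ⟨i, hi⟩ := Function.ne_iff.mp hne
  have hother (k : ι) (hk : k ≠ i) : y k = 0 := by
    by_contra hk0
    exact hk (hd ((eigen k hk0).trans (eigen i hi).symm))
  rw [dotProduct, Fintype.sum_eq_single i fun k hk => by rw [hother k hk, mul_zero]] at hxy
  exact mul_ne_zero (star_ne_zero.mpr (hx i)) hi hxy

theorem dense_setOf_injective {ι : Type*} [Finite ι] :
    Dense {d : ι → ℝ | Function.Injective d} := by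
  have := Fintype.ofFinite ι
  have diagonals : {d : ι → ℝ | Function.Injective d} =
      ⋂ p : {p : ι × ι // p.1 ≠ p.2}, {d | d p.1.1 - d p.1.2 ≠ 0} := by
    ext d
    simp [Function.Injective, sub_eq_zero, not_imp_not]
  rw [diagonals]
  refine dense_iInter_of_isOpen (fun p => isOpen_ne_fun (by fun_prop) (by fun_prop)) ?_
  rintro ⟨⟨i, j⟩, hij⟩
  classical
  let l : (ι → ℝ) →ₗ[ℝ] ℝ :=
    LinearMap.proj (R := ℝ) (φ := fun _ => ℝ) i - LinearMap.proj (R := ℝ) (φ := fun _ => ℝ) j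
  have hl : Function.Surjective l := fun c => ⟨Pi.single i c, by simp [l, (hij : i ≠ j).symm]⟩
  exact (dense_compl_singleton 0).preimage (l.isOpenMap_of_finiteDimensional hl)

theorem mem_closure_isObservable (hA : A.IsHermitian) (x : ι → 𝕜) :
    (A, x) ∈ closure {p : Matrix ι ι 𝕜 × (ι → 𝕜) | p.1.IsHermitian ∧ IsObservable p.1 p.2} := by
  classical
  let U := hA.eigenvectorUnitary
  let F : (ι → ℝ) × (ι → 𝕜) → Matrix ι ι 𝕜 × (ι → 𝕜) := fun p =>
    ((U : Matrix ι ι 𝕜) * Matrix.diagonal (RCLike.ofReal ∘ p.1) * star (U : Matrix ι ι 𝕜),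
      (U : Matrix ι ι 𝕜) *ᵥ p.2)
  have hF : Continuous F := by fun_prop
  have hAx : F (hA.eigenvalues, eigenCoord hA x) = (A, x) := by
    refine Prod.ext ?_ ?_
    · exact (Unitary.conjStarAlgAut_apply U _).symm.trans hA.spectral_theorem.symm
    · simp only [F, U, eigenCoord, mulVec_mulVec, Unitary.mul_star_self_of_mem (Subtype.prop _),
        one_mulVec]
  have generic : Dense ({d : ι → ℝ | Function.Injective d} ×ˢ
      univ.pi fun _ : ι => ({0}ᶜ : Set 𝕜)) :=
    dense_setOf_injective.prod (dense_pi _ fun _ _ => dense_compl_singleton 0)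
  rw [← hAx]
  refine map_mem_closure hF (generic _) fun p ⟨hd, hp⟩ => ⟨?_, ?_⟩
  · refine isHermitian_mul_mul_conjTranspose _ (isHermitian_diagonal_of_self_adjoint _ ?_)
    ext i
    simp
  · have hdiag : IsObservable (Matrix.diagonal (RCLike.ofReal ∘ p.1) : Matrix ι ι 𝕜) p.2 :=
      isObservable_diagonal (RCLike.ofReal_injective.comp hd) fun i => hp i trivial
    exact hdiag.conj U

end Observable

section MatrixMonotone

open scoped MatrixOrder

theorem orderClosedTopology_matrix {𝕜 ι : Type*} [RCLike 𝕜] [Finite ι] :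
    OrderClosedTopology (Matrix ι ι 𝕜) where
  isClosed_le' := by
    have := Fintype.ofFinite ι
    have quadratic_forms : {p : Matrix ι ι 𝕜 × Matrix ι ι 𝕜 | p.1 ≤ p.2} =
        {p | (p.2 - p.1)ᴴ = p.2 - p.1} ∩ ⋂ w, {p | 0 ≤ star w ⬝ᵥ ((p.2 - p.1) *ᵥ w)} := by
      ext p
      simp [Matrix.le_iff, posSemidef_iff_dotProduct_mulVec, IsHermitian]
    rw [quadratic_forms]
    exact (isClosed_eq (by fun_prop) (by fun_prop)).inter
      (isClosed_iInter fun w => isClosed_le (by fun_prop) (by fun_prop))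

variable {𝕜 ι : Type*} [RCLike 𝕜] [Fintype ι] [DecidableEq ι]

open scoped Matrix.Norms.L2Operator in
/-- The `L²` operator norm on matrices over `ℝ` or `ℂ`, as a norm of real algebras: the
library has it over `𝕜` only, while the continuity of the real spectrum needs it over `ℝ`. -/
noncomputable abbrev l2OpNormedAlgebraReal : NormedAlgebra ℝ (Matrix ι ι 𝕜) where
  norm_smul_le r A := by
    rw [RCLike.real_smul_eq_coe_smul (K := 𝕜), norm_smul, RCLike.norm_ofReal, Real.norm_eq_abs]

open Topology in
open scoped Matrix.Norms.L2Operator in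
theorem eventually_spectrum_subset {s : Set ℝ} (hs : IsOpen s) {A : Matrix ι ι 𝕜}
    (hA : spectrum ℝ A ⊆ s) : ∀ᶠ B in 𝓝 A, spectrum ℝ B ⊆ s :=
  letI := l2OpNormedAlgebraReal (𝕜 := 𝕜) (ι := ι)
  have := FiniteDimensional.complete 𝕜 (Matrix ι ι 𝕜)
  ((upperHemicontinuous_spectrum ℝ (Matrix ι ι 𝕜)).upperHemicontinuousAt A s
    (hs.mem_nhdsSet.mpr hA)).mono fun _ => subset_of_mem_nhdsSet

open scoped Matrix.Norms.L2Operator in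
theorem continuousOn_cfc_setOf_spectrum_subset {s : Set ℝ} (hs : IsOpen s) {f : ℝ → ℝ}
    (hf : ContinuousOn f s) :
    ContinuousOn (cfc f) {A : Matrix ι ι 𝕜 | IsSelfAdjoint A ∧ spectrum ℝ A ⊆ s} :=
  letI := l2OpNormedAlgebraReal (𝕜 := 𝕜) (ι := ι)
  have := FiniteDimensional.complete 𝕜 (Matrix ι ι 𝕜)
  ContinuousOn.cfc_of_mem_nhdsSet f
    (hs.mem_nhdsSet.mpr (iUnion₂_subset fun _ (hA : _ ∧ _) => hA.2))
    continuousOn_id fun _ hA => hA.1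

theorem cfc_le_cfc_add_vecMulVec_of_isObservable {f : ℝ → ℝ} {s : Set ℝ} (hs : IsOpen s)
    [s.OrdConnected] (hf : ContDiffOn ℝ (2 * Fintype.card ι - 1 : ℕ) f s)
    (hM : ∀ t ∈ s, (hankelMatrix (Fintype.card ι) f s t).PosSemidef) {A : Matrix ι ι 𝕜}
    {x : ι → 𝕜} (hA : A.IsHermitian) (hx : IsObservable A x) (hAs : spectrum ℝ A ⊆ s)
    (hBs : spectrum ℝ (A + vecMulVec x (star x)) ⊆ s) :
    cfc f A ≤ cfc f (A + vecMulVec x (star x)) :=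
  have hB : (A + vecMulVec x (star x)).IsHermitian := hA.add (posSemidef_vecMulVec_self_star x).1
  cfc_le_cfc_add_vecMulVec_of_injective hs hf hM hA hB
    ((hx.injective_eigenvalues hA).sumElim (hx.add_vecMulVec.injective_eigenvalues hB)
      (hx.eigenvalues_ne_eigenvalues hA hB)) hAs hBs

open Topology in
theorem cfc_le_cfc_add_vecMulVec {f : ℝ → ℝ} {s : Set ℝ} (hs : IsOpen s) [s.OrdConnected]
    (hf : ContDiffOn ℝ (2 * Fintype.card ι - 1 : ℕ) f s)
    (hM : ∀ t ∈ s, (hankelMatrix (Fintype.card ι) f s t).PosSemidef) {A : Matrix ι ι 𝕜}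
    {x : ι → 𝕜} (hA : A.IsHermitian) (hAs : spectrum ℝ A ⊆ s)
    (hBs : spectrum ℝ (A + vecMulVec x (star x)) ⊆ s) :
    cfc f A ≤ cfc f (A + vecMulVec x (star x)) := by
  let T := {p : Matrix ι ι 𝕜 × (ι → 𝕜) | p.1.IsHermitian ∧ IsObservable p.1 p.2}
  let update : Matrix ι ι 𝕜 × (ι → 𝕜) → Matrix ι ι 𝕜 := fun p =>
    p.1 + vecMulVec p.2 (star p.2)
  have hupdate : Continuous update :=
    continuous_fst.add (continuous_snd.matrix_vecMulVec continuous_snd.star)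
  have : (𝓝[T] (A, x)).NeBot := mem_closure_iff_nhdsWithin_neBot.mp (mem_closure_isObservable hA x)
  have tendsto_cfc {g : Matrix ι ι 𝕜 × (ι → 𝕜) → Matrix ι ι 𝕜} (hg : Continuous g)
      (hgT : ∀ p, p.1.IsHermitian → (g p).IsHermitian) (hgs : spectrum ℝ (g (A, x)) ⊆ s) :
      (∀ᶠ p in 𝓝[T] (A, x), spectrum ℝ (g p) ⊆ s) ∧
        Filter.Tendsto (fun p => cfc f (g p)) (𝓝[T] (A, x)) (𝓝 (cfc f (g (A, x)))) := by
    have hev := nhdsWithin_le_nhds (s := T)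
      (hg.continuousAt.eventually (eventually_spectrum_subset hs hgs))
    refine ⟨hev, (continuousOn_cfc_setOf_spectrum_subset hs hf.continuousOn (g (A, x))
      ⟨hgT _ hA, hgs⟩).tendsto.comp (tendsto_nhdsWithin_iff.mpr
        ⟨hg.continuousAt.mono_left nhdsWithin_le_nhds, ?_⟩)⟩
    filter_upwards [hev, self_mem_nhdsWithin] with p hps hp using ⟨hgT p hp.1, hps⟩
  obtain ⟨hAev, hAlim⟩ := tendsto_cfc continuous_fst (fun _ => id) hAs
  obtain ⟨hBev, hBlim⟩ := tendsto_cfc hupdate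
    (fun p hp => hp.add (posSemidef_vecMulVec_self_star p.2).1) hBs
  have := orderClosedTopology_matrix (𝕜 := 𝕜) (ι := ι)
  refine le_of_tendsto_of_tendsto hAlim hBlim ?_
  filter_upwards [hAev, hBev, self_mem_nhdsWithin] with p hpA hpB hp
  exact cfc_le_cfc_add_vecMulVec_of_isObservable hs hf hM hp.1 hp.2 hpA hpB

theorem spectrum_subset_of_le_of_le {s : Set ℝ} [s.OrdConnected] {A B C : Matrix ι ι 𝕜}
    (hA : A.IsHermitian) (hB : B.IsHermitian) (hAs : spectrum ℝ A ⊆ s)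
    (hBs : spectrum ℝ B ⊆ s) (hAC : A ≤ C) (hCB : C ≤ B) : spectrum ℝ C ⊆ s := by
  have hC : C.IsHermitian := by simpa using (Matrix.le_iff.mp hAC).1.add hA
  intro c hc
  have : Nonempty ι := by
    rw [hC.spectrum_real_eq_range_eigenvalues] at hc
    exact ⟨hc.choose⟩
  obtain ⟨l, hl, hl_least⟩ := finite_real_spectrum.isCompact.exists_isLeast
    (ContinuousFunctionalCalculus.spectrum_nonempty (R := ℝ) A hA.isSelfAdjoint)
  obtain ⟨m, hm, hm_greatest⟩ := finite_real_spectrum.isCompact.exists_isGreatest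
    (ContinuousFunctionalCalculus.spectrum_nonempty (R := ℝ) B hB.isSelfAdjoint)
  have hlC : algebraMap ℝ _ l ≤ C :=
    ((algebraMap_le_iff_le_spectrum hA.isSelfAdjoint).mpr fun _ h => hl_least h).trans hAC
  have hCm : C ≤ algebraMap ℝ _ m :=
    hCB.trans ((le_algebraMap_iff_spectrum_le hB.isSelfAdjoint).mpr fun _ h => hm_greatest h)
  exact s.Icc_subset (hAs hl) (hBs hm)
    ⟨(algebraMap_le_iff_le_spectrum hC.isSelfAdjoint).mp hlC c hc,
      (le_algebraMap_iff_spectrum_le hC.isSelfAdjoint).mp hCm c hc⟩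

theorem stmt11_general {n : ℕ} (hι : Fintype.card ι ≤ n) {s : Set ℝ} (hs : IsOpen s)
    [s.OrdConnected] {f : ℝ → ℝ} (hf : ContDiffOn ℝ (2 * n - 1 : ℕ) f s)
    (hM : ∀ t ∈ s, (hankelMatrix n f s t).PosSemidef) :
    MonotoneOn (cfc f) {A : Matrix ι ι 𝕜 | A.IsHermitian ∧ spectrum ℝ A ⊆ s} := by
  rintro A ⟨hA, hAs⟩ B ⟨hB, hBs⟩ hAB
  obtain ⟨m, v, hv⟩ := posSemidef_iff_eq_sum_vecMulVec.mp (Matrix.le_iff.mp hAB)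
  let partialSum (S : Finset (Fin m)) : Matrix ι ι 𝕜 := ∑ i ∈ S, vecMulVec (v i) (star (v i))
  have hsum (S : Finset (Fin m)) : (partialSum S).PosSemidef :=
    posSemidef_sum S fun i _ => posSemidef_vecMulVec_self_star (v i)
  have hspec (S : Finset (Fin m)) : spectrum ℝ (A + partialSum S) ⊆ s := by
    refine spectrum_subset_of_le_of_le hA hB hAs hBs ?_ ?_
    · rw [Matrix.le_iff, add_sub_cancel_left]
      exact hsum S
    · rw [Matrix.le_iff, ← sub_sub, hv, ← Finset.sum_compl_add_sum S, add_sub_cancel_right]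
      exact hsum Sᶜ
  have mono (S : Finset (Fin m)) : cfc f A ≤ cfc f (A + partialSum S) := by
    induction S using Finset.induction_on with
    | empty => simp [partialSum]
    | insert i S hi ih =>
      have hinsert : A + partialSum (insert i S) =
          A + partialSum S + vecMulVec (v i) (star (v i)) := by
        rw [add_assoc, add_comm (partialSum S)]
        exact congrArg (A + ·) (Finset.sum_insert hi)
      rw [hinsert]
      exact ih.trans (cfc_le_cfc_add_vecMulVec hs (hf.of_le (by norm_cast; lia))
        (fun t ht => (hM t ht).submatrix (Fin.castLE hι)) (hA.add (hsum S).1) (hspec S)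
        (hinsert ▸ hspec _))
  have hB_eq : A + partialSum Finset.univ = B := by rw [← add_sub_cancel A B, hv]
  exact hB_eq ▸ mono Finset.univ

end MatrixMonotone

/-- If the Hankel matrix `M_n(t,f)` is positive semi-definite for every `t ∈ (a,b)`, then `f`
is matrix monotone of order `n` on `(a,b)`: for Hermitian `A ≤ B` with spectra in `(a,b)`,
`f(A) ≤ f(B)` (matrix functions via the functional calculus for Hermitian matrices). -/
theorem stmt11 (n : ℕ) (hn : 2 ≤ n) (a b : ℝ) (f : ℝ → ℝ)
    (hf : ContDiffOn ℝ (2 * n - 1 : ℕ) f (Ioo a b))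
    (hM : ∀ t ∈ Ioo a b,
      (Matrix.of fun i j : Fin n =>
        iteratedDerivWithin (i.val + j.val + 1) f (Ioo a b) t /
          (Nat.factorial (i.val + j.val + 1) : ℝ)).PosSemidef) :
    ∀ (A B : Matrix (Fin n) (Fin n) ℂ) (hA : A.IsHermitian) (hB : B.IsHermitian),
      (∀ i, hA.eigenvalues i ∈ Ioo a b) → (∀ i, hB.eigenvalues i ∈ Ioo a b) →
      (B - A).PosSemidef → (hB.cfc f - hA.cfc f).PosSemidef := by
  intro A B hA hB hAab hBab hBA
  rw [← range_subset_iff, ← hA.spectrum_real_eq_range_eigenvalues] at hAab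
  rw [← range_subset_iff, ← hB.spectrum_real_eq_range_eigenvalues] at hBab
  rw [← hA.cfc_eq, ← hB.cfc_eq]
  exact stmt11_general (Fintype.card_fin n).le isOpen_Ioo hf hM ⟨hA, hAab⟩ ⟨hB, hBab⟩ hBA
end

section
/- Let n ≥ 2 and f ∈ C^{2n}(a,b). If the Hankel matrix K_n(t,f) = (f^{(i+j)}(t)/(i+j)!)_{1≤i,j≤n} is positive semi-definite for every t ∈ (a,b), then the Kraus matrix ([λᵢ,λⱼ,λ₀]_f)_{1≤i,j≤n} is positive semi-definite for every tuple (λ₁,...,λₙ) ∈ (a,b)^n and every λ₀ ∈ (a,b). -/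
open Set Matrix

/-
For `P = ∑ i, c i • ∏ j ≠ i, (X - λ j)` the quadratic form of the Kraus matrix at `c`, as a function
`q x = ∑ i, ∑ j, c i * c j * [λ i, λ j, x]_f`, is the Hermite interpolation quotient of `P ^ 2 * f`
at the double nodes `λ i`: the Newton expansion of `f` at `λ i, λ j` gives
`P ^ 2 * f = R + (∏ i, (X - λ i)) ^ 2 * q` with `deg R < 2 * n`. Rolle's theorem therefore yields,
for every `x` off the nodes, a point `ξ` with `(P ^ 2 * f)^(2n) ξ = (2n)! * q x`, while by Leibniz'
rule the left side is `(2n)!` times the quadratic form of the Hankel matrix `K_n(ξ, f)` at the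
reversed Taylor coefficients of `P` at `ξ`. Repeated `λ i` only repeat rows and columns, and
`x = λ i` follows by continuity of `q`.
-/

open Filter Topology Asymptotics
open Polynomial (X C)
open Lagrange (nodal)
open scoped Polynomial

section DividedDifference

variable {𝕜 E : Type*} [NontriviallyNormedField 𝕜] [NormedAddCommGroup E] [NormedSpace 𝕜 E]

theorem dslope_comm (f : 𝕜 → E) (s t : 𝕜) : dslope f s t = dslope f t s := by
  rcases eq_or_ne s t with rfl | h
  · rfl
  · rw [dslope_of_ne f h.symm, dslope_of_ne f h, slope_comm]

theorem eq_add_sub_smul_dslope_add_sub_smul_dslope_dslope (f : 𝕜 → E) (s t x : 𝕜) :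
    f x = f s + (x - s) • (dslope f s t + (x - t) • dslope (dslope f s) t x) := by
  rw [sub_smul_dslope, add_sub_cancel, sub_smul_dslope, add_sub_cancel]

theorem dslope_dslope_comm_of_ne (f : 𝕜 → E) {s t x : 𝕜} (hs : x ≠ s) (ht : x ≠ t) :
    dslope (dslope f s) t x = dslope (dslope f t) s x := by
  have hst := eq_add_sub_smul_dslope_add_sub_smul_dslope_dslope f s t x
  have hts := eq_add_sub_smul_dslope_add_sub_smul_dslope_dslope f t s x
  rw [dslope_comm f t s] at hts
  have h : ((x - s) * (x - t)) • dslope (dslope f s) t x =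
      ((x - s) * (x - t)) • dslope (dslope f t) s x := by
    linear_combination (norm := module) hts - hst - sub_smul_dslope f s t
  exact smul_right_injective E (mul_ne_zero (sub_ne_zero.2 hs) (sub_ne_zero.2 ht)) h

theorem continuousAt_dslope_of_differentiableAt {f : 𝕜 → E} {s x : 𝕜}
    (hf : DifferentiableAt 𝕜 f x) : ContinuousAt (dslope f s) x := by
  rcases eq_or_ne x s with rfl | h
  · exact continuousAt_dslope_same.2 hf
  · exact (continuousAt_dslope_of_ne h).2 hf.continuousAt

theorem ite_derivWithin_eq_dslope [DecidableEq 𝕜] {U : Set 𝕜} (hU : IsOpen U) (f : 𝕜 → 𝕜)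
    (x : 𝕜) {y : 𝕜} (hy : y ∈ U) :
    (if x = y then derivWithin f U x else (f x - f y) / (x - y)) = dslope f y x := by
  split_ifs with h
  · rw [h, derivWithin_of_isOpen hU hy, dslope_same]
  · rw [dslope_of_ne f h, slope_def_field]

end DividedDifference

section SecondOrder

variable {f : ℝ → ℝ} {x : ℝ}

theorem differentiableAt_dslope_same (hf : ContDiffAt ℝ 2 f x) :
    DifferentiableAt ℝ (dslope f x) x := by
  obtain ⟨u, hu, hfu⟩ := hf.contDiffOn le_rfl (by simp)
  obtain ⟨ε, hε, hball⟩ := Metric.mem_nhds_iff.1 (show u ∈ 𝓝 x by simpa using hu)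
  have hx := Metric.mem_ball_self hε (x := x)
  have htaylor := Real.taylor_tendsto (n := 2) (convex_ball x ε) hx (hfu.mono hball)
  rw [Metric.isOpen_ball.nhdsWithin_eq hx] at htaylor
  have hderiv : derivWithin f (Metric.ball x ε) x = deriv f x :=
    derivWithin_of_isOpen Metric.isOpen_ball hx
  set f₂ := iteratedDerivWithin 2 f (Metric.ball x ε) x / 2 with hf₂
  have hslope : Tendsto (slope (dslope f x) x) (𝓝[≠] x) (𝓝 (0 + f₂)) := by
    refine ((htaylor.mono_left nhdsWithin_le_nhds).add_const f₂).congr' ?_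
    filter_upwards [self_mem_nhdsWithin] with y hy
    have hy' : y - x ≠ 0 := sub_ne_zero.2 hy
    simp only [taylorWithinEval_succ, taylor_within_zero_eval, zero_add, iteratedDerivWithin_one,
      hderiv, slope_def_field, dslope_of_ne f hy, dslope_same, smul_eq_mul, hf₂]
    simp only [CharP.cast_eq_zero, zero_add, Nat.factorial, Nat.cast_one, mul_one, inv_one,
      pow_one, one_mul, Nat.succ_eq_add_one, Nat.reduceAdd]
    field_simp
    ring
  exact (hasDerivAt_iff_tendsto_slope.2 hslope).differentiableAt

theorem differentiableAt_dslope_of_contDiffAt {s : ℝ} (hf : ContDiffAt ℝ 2 f x) :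
    DifferentiableAt ℝ (dslope f s) x := by
  rcases eq_or_ne x s with rfl | h
  · exact differentiableAt_dslope_same hf
  · exact (differentiableAt_dslope_of_ne h).2 (hf.differentiableAt (by simp))

end SecondOrder

section Rolle

variable {U : Set ℝ} {g : ℝ → ℝ}

theorem exists_finset_deriv_eq_zero (hU : U.OrdConnected) (hg : ContinuousOn g U)
    {S : Finset ℝ} (hS : ∀ x ∈ S, x ∈ U ∧ g x = 0) :
    ∃ T : Finset ℝ, S.card ≤ T.card + 1 ∧ Disjoint T S ∧ ∀ x ∈ T, x ∈ U ∧ deriv g x = 0 := by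
  have rolle : ∀ x ∈ S, ∀ y ∈ S, x < y → ∃ c ∈ Ioo x y, deriv g c = 0 := fun x hx y hy hxy =>
    exists_deriv_eq_zero hxy (hg.mono (hU.out (hS x hx).1 (hS y hy).1))
      ((hS x hx).2.trans (hS y hy).2.symm)
  choose! c hc hc0 using rolle
  set T : Finset ℝ := ((S ×ˢ S).filter fun p => p.1 < p.2).image fun p => c p.1 p.2
  refine ⟨T \ S, Finset.card_le_sdiff_of_interleaved fun x hx y hy hxy _ => ?_,
    Finset.sdiff_disjoint, fun u hu => ?_⟩
  · exact ⟨c x y, Finset.mem_image.2 ⟨(x, y), by simp [hx, hy, hxy], rfl⟩, hc x hx y hy hxy⟩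
  · obtain ⟨⟨x, y⟩, hp, rfl⟩ := Finset.mem_image.1 (Finset.mem_sdiff.1 hu).1
    simp only [Finset.mem_filter, Finset.mem_product] at hp
    obtain ⟨⟨hx, hy⟩, hxy⟩ := hp
    exact ⟨hU.out (hS x hx).1 (hS y hy).1 (Ioo_subset_Icc_self (hc x hx y hy hxy)),
      hc0 x hx y hy hxy⟩

theorem exists_iteratedDeriv_eq_zero (hUo : IsOpen U) (hU : U.OrdConnected) {k : ℕ}
    (hg : ContDiffOn ℝ k g U) {S : Finset ℝ} (hS : ∀ x ∈ S, x ∈ U ∧ g x = 0) (hk : k < S.card) :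
    ∃ ξ ∈ U, iteratedDeriv k g ξ = 0 := by
  induction k generalizing g S with
  | zero =>
    obtain ⟨x, hx⟩ := Finset.card_pos.1 hk
    exact ⟨x, by simpa using hS x hx⟩
  | succ k ih =>
    obtain ⟨T, hcard, -, hT⟩ := exists_finset_deriv_eq_zero hU hg.continuousOn hS
    rw [iteratedDeriv_succ']
    exact ih (hg.deriv_of_isOpen hUo (by norm_cast)) hT (by omega)

theorem exists_iteratedDeriv_eq_zero_of_double_zeros (hUo : IsOpen U) (hU : U.OrdConnected)
    {S : Finset ℝ} (hg : ContDiffOn ℝ (2 * S.card : ℕ) g U)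
    (hS : ∀ x ∈ S, x ∈ U ∧ g x = 0 ∧ deriv g x = 0) {z : ℝ} (hz : z ∈ U) (hgz : g z = 0)
    (hzS : z ∉ S) : ∃ ξ ∈ U, iteratedDeriv (2 * S.card) g ξ = 0 := by
  have hzeros : ∀ x ∈ insert z S, x ∈ U ∧ g x = 0 :=
    (Finset.forall_mem_insert ..).2 ⟨⟨hz, hgz⟩, fun x hx => ⟨(hS x hx).1, (hS x hx).2.1⟩⟩
  obtain ⟨T, hcard, hdisj, hT⟩ := exists_finset_deriv_eq_zero hU hg.continuousOn hzeros
  rw [Finset.card_insert_of_notMem hzS] at hcard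
  rcases hk : 2 * S.card with _ | k
  · exact ⟨z, hz, by simpa using hgz⟩
  rw [hk] at hg
  rw [iteratedDeriv_succ']
  have hderiv : ∀ x ∈ T ∪ S, x ∈ U ∧ deriv g x = 0 := fun x hx =>
    (Finset.mem_union.1 hx).elim (hT x) fun hx => ⟨(hS x hx).1, (hS x hx).2.2⟩
  refine exists_iteratedDeriv_eq_zero hUo hU (hg.deriv_of_isOpen hUo (by norm_cast)) hderiv ?_
  rw [Finset.card_union_of_disjoint (hdisj.mono_right (Finset.subset_insert z S))]
  omega

end Rolle

section Polynomial

theorem eval_eq_sum_taylor_coeff_rev {R : Type*} [CommRing R] {m : ℕ} {P : R[X]}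
    (hP : P.natDegree < m) (t x : R) :
    P.eval x = ∑ i : Fin m, (P.taylor t).coeff (m - 1 - i) * (x - t) ^ (m - 1 - i : ℕ) := by
  rw [Fin.sum_univ_eq_sum_range fun i => (P.taylor t).coeff (m - 1 - i) * (x - t) ^ (m - 1 - i),
    Finset.sum_range_reflect fun i => (P.taylor t).coeff i * (x - t) ^ i,
    ← Polynomial.taylor_eval_sub t,
    Polynomial.eval_eq_sum_range' ((Polynomial.natDegree_taylor P t).trans_lt hP)]

variable {𝕜 : Type*} [NontriviallyNormedField 𝕜]

theorem contDiff_polynomial_eval_s16 {k : WithTop ℕ∞} (p : 𝕜[X]) : ContDiff 𝕜 k (p.eval ·) := by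
  simpa only [Polynomial.coe_aeval_eq_eval] using p.contDiff_aeval (𝕜 := 𝕜) k

theorem iteratedDeriv_polynomial_eval (p : 𝕜[X]) (k : ℕ) :
    iteratedDeriv k (p.eval ·) = (Polynomial.derivative^[k] p).eval := by
  induction k generalizing p with
  | zero => simp
  | succ k ih =>
    rw [iteratedDeriv_succ', Function.iterate_succ_apply, ← ih]
    congr with x
    exact p.deriv

theorem iteratedDeriv_polynomial_eval_of_natDegree_le {p : 𝕜[X]} {k : ℕ}
    (hp : p.natDegree ≤ k) (x : 𝕜) :
    iteratedDeriv k (p.eval ·) x = k.factorial * p.coeff k := by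
  have hconst : (Polynomial.derivative^[k] p).natDegree ≤ 0 :=
    (Polynomial.natDegree_iterate_derivative p k).trans (by omega)
  rw [iteratedDeriv_polynomial_eval, Polynomial.eq_C_of_natDegree_le_zero hconst,
    Polynomial.coeff_iterate_derivative]
  simp [Nat.descFactorial_self]

theorem hasDerivAt_mul_of_eq_zero {p q : 𝕜 → 𝕜} {p' u : 𝕜} (hp : HasDerivAt p p' u)
    (hpu : p u = 0) (hq : ContinuousAt q u) :
    HasDerivAt (fun x => p x * q x) (p' * q u) u := by
  rw [hasDerivAt_iff_tendsto_slope]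
  refine (hp.tendsto_slope.mul (hq.mono_left nhdsWithin_le_nhds)).congr fun x => ?_
  simp only [slope_def_field, hpu]
  ring

end Polynomial

section HermiteRemainder

variable {ι : Type*} [Fintype ι]

theorem iteratedDeriv_add_C_mul_nodal_sq {𝕜 : Type*} [NontriviallyNormedField 𝕜] (v : ι → 𝕜)
    (a : 𝕜) {R : 𝕜[X]} (hR : R.natDegree < 2 * Fintype.card ι) (x : 𝕜) :
    iteratedDeriv (2 * Fintype.card ι) ((R + C a * nodal Finset.univ v ^ 2).eval ·) x =
      (2 * Fintype.card ι).factorial * a := by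
  have hmonic : (nodal Finset.univ v ^ 2).Monic := Lagrange.nodal_monic.pow 2
  have hdeg : (nodal Finset.univ v ^ 2).natDegree = 2 * Fintype.card ι := by
    rw [Polynomial.natDegree_pow, Lagrange.natDegree_nodal, Finset.card_univ]
  have hcoeff : (R + C a * nodal Finset.univ v ^ 2).coeff (2 * Fintype.card ι) = a := by
    rw [Polynomial.coeff_add, Polynomial.coeff_eq_zero_of_natDegree_lt hR,
      Polynomial.coeff_C_mul, ← hdeg, hmonic.coeff_natDegree, zero_add, mul_one]
  rw [iteratedDeriv_polynomial_eval_of_natDegree_le, hcoeff]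
  exact Polynomial.natDegree_add_le_of_degree_le hR.le
    ((Polynomial.natDegree_C_mul_le _ _).trans hdeg.le)

theorem exists_iteratedDeriv_eq_of_eq_add_nodal_sq_mul {U : Set ℝ} (hUo : IsOpen U)
    (hU : U.OrdConnected) {v : ι → ℝ} (hv : Function.Injective v) (hvU : ∀ i, v i ∈ U)
    {F q : ℝ → ℝ} {R : ℝ[X]} (hF : ContDiffOn ℝ (2 * Fintype.card ι : ℕ) F U)
    (hq : ∀ i, ContinuousAt q (v i)) (hR : R.natDegree < 2 * Fintype.card ι)
    (hFRq : ∀ x, F x = R.eval x + (nodal Finset.univ v).eval x ^ 2 * q x)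
    {z : ℝ} (hz : z ∈ U) (hzv : z ∉ range v) :
    ∃ ξ ∈ U, iteratedDeriv (2 * Fintype.card ι) F ξ =
      (2 * Fintype.card ι).factorial * q z := by
  classical
  set Q := nodal Finset.univ v
  set H : ℝ[X] := R + C (q z) * Q ^ 2 with hH
  have hcard : (Finset.univ.image v).card = Fintype.card ι := Finset.card_image_of_injective _ hv
  have hdiff : ∀ x, F x - H.eval x = Q.eval x * (Q.eval x * (q x - q z)) := fun x => by
    simp only [hFRq, hH, Polynomial.eval_add, Polynomial.eval_mul, Polynomial.eval_C,
      Polynomial.eval_pow]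
    ring
  have hQv : ∀ i, Q.eval (v i) = 0 := fun i => Lagrange.eval_nodal_at_node (Finset.mem_univ i)
  have hdouble : ∀ i, HasDerivAt (fun x => F x - H.eval x) 0 (v i) := fun i => by
    simpa [hdiff, hQv] using hasDerivAt_mul_of_eq_zero (Q.hasDerivAt (v i)) (hQv i)
      (Q.continuous.continuousAt.mul ((hq i).sub continuousAt_const))
  have hH_smooth : ContDiff ℝ (2 * Fintype.card ι : ℕ) (H.eval ·) := contDiff_polynomial_eval_s16 H
  obtain ⟨ξ, hξ, hzero⟩ := exists_iteratedDeriv_eq_zero_of_double_zeros hUo hU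
    (S := Finset.univ.image v) (g := fun x => F x - H.eval x) (z := z)
    (by rw [hcard]; exact hF.sub hH_smooth.contDiffOn)
    (by simpa [hdiff, hQv, hvU] using fun i => (hdouble i).deriv) hz (by simp [hdiff])
    (by simpa using hzv)
  rw [hcard, iteratedDeriv_fun_sub (hF.contDiffAt (hUo.mem_nhds hξ)) hH_smooth.contDiffAt,
    iteratedDeriv_add_C_mul_nodal_sq v (q z) hR] at hzero
  exact ⟨ξ, hξ, sub_eq_zero.1 hzero⟩

end HermiteRemainder

section Hankel

variable {𝕜 : Type*} [NontriviallyNormedField 𝕜]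

/-- The Hankel matrix `K_m(t, f)` of the Taylor coefficients of `f` at `t`, starting in degree `2`
since `Fin m` is indexed from `0`. -/
noncomputable def taylorHankel (m : ℕ) (f : 𝕜 → 𝕜) (t : 𝕜) : Matrix (Fin m) (Fin m) 𝕜 :=
  Matrix.of fun i j => iteratedDeriv (i.val + j.val + 2) f t / (i.val + j.val + 2).factorial

variable [CharZero 𝕜] {f : 𝕜 → 𝕜} {t : 𝕜}

theorem iteratedDeriv_sub_pow_mul_self {N k : ℕ} (hf : ContDiffAt 𝕜 N f t) (hk : k ≤ N) :
    iteratedDeriv N (fun x => (x - t) ^ k * f x) t =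
      N.factorial * (iteratedDeriv (N - k) f t / (N - k).factorial) := by
  have hpow : ∀ i, iteratedDeriv i (fun x : 𝕜 => (x - t) ^ k) t =
      if i = k then (k.factorial : 𝕜) else 0 := fun i => by
    simp only [iteratedDeriv_comp_sub_const i (· ^ k) t, sub_self, iteratedDeriv_fun_pow_zero]
    split_ifs <;> simp
  rw [iteratedDeriv_fun_mul (by fun_prop) hf,
    Finset.sum_eq_single_of_mem k (Finset.mem_range_succ_iff.2 hk) fun i _ hi => by simp [hpow, hi],
    hpow, if_pos rfl, ← Nat.choose_mul_factorial_mul_factorial hk]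
  have := Nat.factorial_ne_zero (N - k)
  push_cast
  field_simp

theorem iteratedDeriv_sum_sub_pow_sq_mul {m : ℕ} (hf : ContDiffAt 𝕜 (2 * m : ℕ) f t)
    (d : Fin m → 𝕜) :
    iteratedDeriv (2 * m) (fun x => (∑ i, d i * (x - t) ^ (m - 1 - i : ℕ)) ^ 2 * f x) t =
      (2 * m).factorial * (d ⬝ᵥ taylorHankel m f t *ᵥ d) := by
  have hexpand : (fun x => (∑ i, d i * (x - t) ^ (m - 1 - i : ℕ)) ^ 2 * f x) =
      fun x => ∑ i : Fin m, ∑ j : Fin m,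
        (d i * d j) * ((x - t) ^ ((m - 1 - i) + (m - 1 - j) : ℕ) * f x) := by
    ext x
    rw [sq, Finset.sum_mul_sum]
    simp only [Finset.sum_mul]
    exact Finset.sum_congr rfl fun i _ => Finset.sum_congr rfl fun j _ => by ring
  have hsmooth : ∀ a k, ContDiffAt 𝕜 (2 * m : ℕ) (fun x => a * ((x - t) ^ k * f x)) t :=
    fun a k => by fun_prop
  have hterm : ∀ i j : Fin m, iteratedDeriv (2 * m)
      (fun x => (x - t) ^ ((m - 1 - i) + (m - 1 - j) : ℕ) * f x) t =
        (2 * m).factorial * taylorHankel m f t i j := fun i j => by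
    have hij : 2 * m - ((m - 1 - i) + (m - 1 - j) : ℕ) = i + j + 2 := by omega
    rw [iteratedDeriv_sub_pow_mul_self hf (by omega), hij, taylorHankel, Matrix.of_apply]
  rw [hexpand, iteratedDeriv_fun_sum fun i _ => ContDiffAt.sum fun j _ => hsmooth _ _]
  simp only [dotProduct, mulVec, Finset.mul_sum]
  refine Finset.sum_congr rfl fun i _ => ?_
  rw [iteratedDeriv_fun_sum fun j _ => hsmooth _ _]
  refine Finset.sum_congr rfl fun j _ => ?_
  rw [iteratedDeriv_const_mul_field, hterm]
  ring

theorem iteratedDeriv_sq_mul_nonneg {m : ℕ} {f : ℝ → ℝ} {t : ℝ}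
    (hf : ContDiffAt ℝ (2 * m : ℕ) f t) (hK : (taylorHankel m f t).PosSemidef) {P : ℝ[X]}
    (hP : P.natDegree < m) : 0 ≤ iteratedDeriv (2 * m) (fun x => P.eval x ^ 2 * f x) t := by
  simp only [eval_eq_sum_taylor_coeff_rev hP t]
  rw [iteratedDeriv_sum_sub_pow_sq_mul hf fun i => (P.taylor t).coeff (m - 1 - i)]
  exact mul_nonneg (Nat.cast_nonneg _) (hK.dotProduct_mulVec_nonneg _)

theorem posSemidef_taylorHankel_of_le {m n : ℕ} (hmn : m ≤ n) {f : ℝ → ℝ} {t : ℝ}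
    (hK : (taylorHankel n f t).PosSemidef) : (taylorHankel m f t).PosSemidef :=
  hK.submatrix (Fin.castLE hmn)

end Hankel

section WeightedNodal

variable {R ι : Type*} [CommRing R] [Fintype ι] [DecidableEq ι]

theorem natDegree_nodal_erase [Nontrivial R] (v : ι → R) (i : ι) :
    (nodal (Finset.univ.erase i) v).natDegree = Fintype.card ι - 1 := by
  rw [Lagrange.natDegree_nodal, Finset.card_erase_of_mem (Finset.mem_univ i), Finset.card_univ]

/-- The polynomial `∑ i, c i • ∏ j ≠ i, (X - v j)`, whose square is the weight turning the
quadratic form of the Kraus matrix at `c` into a divided difference at the double nodes `v i`. -/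
noncomputable def weightedNodal (v c : ι → R) : R[X] :=
  ∑ i, C (c i) * nodal (Finset.univ.erase i) v

theorem natDegree_weightedNodal_lt [Nontrivial R] [Nonempty ι] (v c : ι → R) :
    (weightedNodal v c).natDegree < Fintype.card ι := by
  refine (Polynomial.natDegree_sum_le_of_forall_le _ _ fun i _ =>
    (Polynomial.natDegree_C_mul_le _ _).trans (natDegree_nodal_erase v i).le).trans_lt ?_
  exact Nat.sub_one_lt Fintype.card_ne_zero

end WeightedNodal

section Kraus

variable {𝕜 ι : Type*} [NontriviallyNormedField 𝕜]

/-- The Kraus matrix `([v i, v j, z]_f)`. The second-order divided difference is an iterated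
`dslope`, which takes the limiting value where two of the points coincide; `z` comes last so that
the matrix is visibly a function of it. -/
noncomputable def krausMatrix (f : 𝕜 → 𝕜) (v : ι → 𝕜) (z : 𝕜) : Matrix ι ι 𝕜 :=
  Matrix.of fun i j => dslope (dslope f (v j)) (v i) z

theorem continuousAt_krausMatrix {f : ℝ → ℝ} (v : ι → ℝ) {z : ℝ} (hf : ContDiffAt ℝ 2 f z) :
    ContinuousAt (krausMatrix f v) z :=
  continuousAt_pi.2 fun _ => continuousAt_pi.2 fun _ =>
    continuousAt_dslope_of_differentiableAt (differentiableAt_dslope_of_contDiffAt hf)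

theorem isSymm_krausMatrix (f : 𝕜 → 𝕜) {v : ι → 𝕜} {z : 𝕜} (hz : z ∉ range v) :
    (krausMatrix f v z).IsSymm :=
  Matrix.IsSymm.ext fun i j =>
    dslope_dslope_comm_of_ne f (fun h => hz ⟨i, h.symm⟩) (fun h => hz ⟨j, h.symm⟩)

variable [Fintype ι] [DecidableEq ι]

/-- The remainder of `weightedNodal v c ^ 2 * f` modulo the double nodes `v i`, obtained by
replacing `f` in the `(i, j)` term of the product by its linear interpolant at `v i` and `v j`. -/
noncomputable def krausRemainder (f : 𝕜 → 𝕜) (v c : ι → 𝕜) : 𝕜[X] :=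
  ∑ i, ∑ j, C (c i * c j) * (nodal (Finset.univ.erase i) v * nodal (Finset.univ.erase j) v *
    (C (f (v j)) + (X - C (v j)) * C (dslope f (v j) (v i))))

theorem natDegree_krausRemainder_lt [Nonempty ι] (f : 𝕜 → 𝕜) (v c : ι → 𝕜) :
    (krausRemainder f v c).natDegree < 2 * Fintype.card ι := by
  have hlin : ∀ i j, (C (f (v j)) + (X - C (v j)) * C (dslope f (v j) (v i))).natDegree ≤ 1 :=
    fun i j => by compute_degree
  refine (Polynomial.natDegree_sum_le_of_forall_le
    (n := Fintype.card ι - 1 + (Fintype.card ι - 1) + 1) _ _ fun i _ =>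
      Polynomial.natDegree_sum_le_of_forall_le _ _ fun j _ => ?_).trans_lt ?_
  · grw [Polynomial.natDegree_C_mul_le, Polynomial.natDegree_mul_le, Polynomial.natDegree_mul_le,
      natDegree_nodal_erase, natDegree_nodal_erase, hlin]
  · have := Fintype.card_pos (α := ι)
    omega

theorem weightedNodal_sq_mul_eq (f : 𝕜 → 𝕜) (v c : ι → 𝕜) (x : 𝕜) :
    (weightedNodal v c).eval x ^ 2 * f x = (krausRemainder f v c).eval x +
      (nodal Finset.univ v).eval x ^ 2 * (c ⬝ᵥ krausMatrix f v x *ᵥ c) := by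
  have hnodal : ∀ i, (nodal Finset.univ v).eval x =
      (x - v i) * (nodal (Finset.univ.erase i) v).eval x := fun i => by
    simp [Lagrange.nodal_eq_mul_nodal_erase (Finset.mem_univ i)]
  rw [weightedNodal, Polynomial.eval_finsetSum, sq, Finset.sum_mul_sum]
  simp only [krausRemainder, Polynomial.eval_finsetSum, dotProduct, mulVec, Finset.mul_sum,
    Finset.sum_mul, ← Finset.sum_add_distrib]
  refine Finset.sum_congr rfl fun i _ => Finset.sum_congr rfl fun j _ => ?_
  rw [sq, congrArg₂ (· * ·) (hnodal i) (hnodal j),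
    eq_add_sub_smul_dslope_add_sub_smul_dslope_dslope f (v j) (v i) x]
  simp only [Polynomial.eval_mul, Polynomial.eval_add, Polynomial.eval_sub, Polynomial.eval_X,
    Polynomial.eval_C, krausMatrix, Matrix.of_apply, smul_eq_mul]
  ring

end Kraus

theorem isClosed_setOf_posSemidef {ι R : Type*} [Finite ι] [Ring R] [PartialOrder R] [StarRing R]
    [TopologicalSpace R] [IsTopologicalRing R] [ContinuousStar R] [OrderClosedTopology R] :
    IsClosed {A : Matrix ι ι R | A.PosSemidef} := by
  have := Fintype.ofFinite ι
  simp only [posSemidef_iff_dotProduct_mulVec, Matrix.IsHermitian, ofPred_and, ofPred_forall]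
  exact (isClosed_eq (by fun_prop) continuous_id).inter <| isClosed_iInter fun c =>
    isClosed_le continuous_const (by fun_prop)

section Positivity

variable {ι : Type*} [Fintype ι] {U : Set ℝ} {f : ℝ → ℝ} {v : ι → ℝ} {z : ℝ}

theorem posSemidef_krausMatrix_of_injective_of_notMem_range [Nonempty ι] (hUo : IsOpen U)
    (hU : U.OrdConnected) (hf : ContDiffOn ℝ (2 * Fintype.card ι : ℕ) f U)
    (hK : ∀ t ∈ U, (taylorHankel (Fintype.card ι) f t).PosSemidef) (hv : Function.Injective v)
    (hvU : ∀ i, v i ∈ U) (hz : z ∈ U) (hzv : z ∉ range v) : (krausMatrix f v z).PosSemidef := by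
  classical
  refine PosSemidef.of_dotProduct_mulVec_nonneg (isSymm_krausMatrix f hzv) fun c => ?_
  have hsmooth : ∀ x ∈ U, ContDiffAt ℝ (2 * Fintype.card ι : ℕ) f x := fun x hx =>
    hf.contDiffAt (hUo.mem_nhds hx)
  have htwo : (2 : WithTop ℕ∞) ≤ (2 * Fintype.card ι : ℕ) := by
    exact_mod_cast Nat.le_mul_of_pos_right 2 (Fintype.card_pos (α := ι))
  have hform : ∀ i, ContinuousAt (fun x => c ⬝ᵥ krausMatrix f v x *ᵥ c) (v i) := fun i =>
    (by fun_prop : Continuous fun A : Matrix ι ι ℝ => c ⬝ᵥ A *ᵥ c).continuousAt.comp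
      (continuousAt_krausMatrix v ((hsmooth _ (hvU i)).of_le htwo))
  obtain ⟨ξ, hξ, hξz⟩ := exists_iteratedDeriv_eq_of_eq_add_nodal_sq_mul hUo hU hv hvU
    (((contDiff_polynomial_eval_s16 (weightedNodal v c)).pow 2).contDiffOn.mul hf) hform
    (natDegree_krausRemainder_lt f v c) (weightedNodal_sq_mul_eq f v c) hz hzv
  have hnonneg :=
    iteratedDeriv_sq_mul_nonneg (hsmooth ξ hξ) (hK ξ hξ) (natDegree_weightedNodal_lt v c)
  rw [hξz] at hnonneg
  exact nonneg_of_mul_nonneg_right hnonneg (by positivity)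

theorem posSemidef_krausMatrix (hUo : IsOpen U) (hU : U.OrdConnected) {n : ℕ}
    (hn : Fintype.card ι ≤ n) (hf : ContDiffOn ℝ (2 * n : ℕ) f U)
    (hK : ∀ t ∈ U, (taylorHankel n f t).PosSemidef)
    (hvU : ∀ i, v i ∈ U) (hz : z ∈ U) : (krausMatrix f v z).PosSemidef := by
  classical
  rcases isEmpty_or_nonempty ι with hι | hι
  · rw [Subsingleton.elim (krausMatrix f v z) 0]
    exact .zero
  have hcard : Fintype.card (range v) ≤ n := (Fintype.card_range_le v).trans hn
  have hoff : ∀ᶠ x in 𝓝[≠] z, (krausMatrix f v x).PosSemidef := by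
    filter_upwards [(finite_range v).eventually_cofinite_notMem.filter_mono (nhdsNE_le_cofinite z),
      nhdsWithin_le_nhds (hUo.mem_nhds hz)] with x hxv hxU
    exact (posSemidef_krausMatrix_of_injective_of_notMem_range (v := ((↑) : range v → ℝ)) hUo hU
      (hf.of_le (by gcongr)) (fun t ht => posSemidef_taylorHankel_of_le hcard (hK t ht))
      Subtype.val_injective (by simpa using hvU) hxU (by simpa using hxv)).submatrix
        (rangeFactorization v)
  have htwo : (2 : WithTop ℕ∞) ≤ (2 * n : ℕ) := by
    exact_mod_cast Nat.le_mul_of_pos_right 2 ((Fintype.card_pos (α := ι)).trans_le hn)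
  have hlim : Tendsto (krausMatrix f v) (𝓝[≠] z) (𝓝 (krausMatrix f v z)) :=
    (continuousAt_krausMatrix v ((hf.contDiffAt (hUo.mem_nhds hz)).of_le htwo)).mono_left
      nhdsWithin_le_nhds
  exact isClosed_setOf_posSemidef.mem_of_tendsto hlim hoff

end Positivity

theorem stmt16_general {n : ℕ} {U : Set ℝ} (hUo : IsOpen U) (hU : U.OrdConnected) {f : ℝ → ℝ}
    (hf : ContDiffOn ℝ (2 * n : ℕ) f U)
    (hK : ∀ t ∈ U,
      (Matrix.of fun i j : Fin n =>
        iteratedDerivWithin (i.val + j.val + 2) f U t /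
          (Nat.factorial (i.val + j.val + 2) : ℝ)).PosSemidef)
    {dd1 : ℝ → ℝ → ℝ}
    (hdd1 : ∀ x y, dd1 x y = if x = y then derivWithin f U x else (f x - f y) / (x - y))
    {dd2 : ℝ → ℝ → ℝ → ℝ}
    (hdd2 : ∀ x y z, dd2 x y z = if x = z then derivWithin (fun s => dd1 s y) U x
      else (dd1 x y - dd1 y z) / (x - z))
    {lam : Fin n → ℝ} {lam0 : ℝ} (hlam : ∀ i, lam i ∈ U) (hlam0 : lam0 ∈ U) :
    (Matrix.of fun i j : Fin n => dd2 (lam i) (lam j) lam0).PosSemidef := by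
  have hdd1_eq : ∀ x y, y ∈ U → dd1 x y = dslope f y x := fun x y hy =>
    (hdd1 x y).trans (ite_derivWithin_eq_dslope hUo f x hy)
  have hdd2_eq : ∀ x y, y ∈ U → dd2 x y lam0 = dslope (dslope f y) x lam0 := fun x y hy => by
    rw [hdd2, hdd1_eq y lam0 hlam0, dslope_comm f lam0 y]
    simp only [hdd1_eq _ y hy]
    rw [ite_derivWithin_eq_dslope hUo _ x hlam0, dslope_comm]
  have hHankel : ∀ t ∈ U, (taylorHankel n f t).PosSemidef := fun t ht => by
    simpa only [taylorHankel, iteratedDerivWithin_of_isOpen hUo ht] using hK t ht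
  simp only [hdd2_eq _ _ (hlam _)]
  exact posSemidef_krausMatrix hUo hU (Fintype.card_fin n).le hf hHankel hlam hlam0

/-- If the Hankel matrix `K_n(t,f)` is positive semi-definite for all `t ∈ (a,b)`, then every
Kraus matrix `([λᵢ,λⱼ,λ₀]_f)` with `λ₁,…,λₙ, λ₀ ∈ (a,b)` is positive semi-definite.
Here `dd1` and `dd2` are the first- and second-order divided differences of `f` (extended
continuously to coinciding points). -/
theorem stmt16 (n : ℕ) (hn : 2 ≤ n) (a b : ℝ) (f : ℝ → ℝ)
    (hf : ContDiffOn ℝ (2 * n : ℕ) f (Ioo a b))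
    (hK : ∀ t ∈ Ioo a b,
      (Matrix.of fun i j : Fin n =>
        iteratedDerivWithin (i.val + j.val + 2) f (Ioo a b) t /
          (Nat.factorial (i.val + j.val + 2) : ℝ)).PosSemidef)
    (dd1 : ℝ → ℝ → ℝ)
    (hdd1 : ∀ x y, dd1 x y = if x = y then derivWithin f (Ioo a b) x
      else (f x - f y) / (x - y))
    (dd2 : ℝ → ℝ → ℝ → ℝ)
    (hdd2 : ∀ x y z, dd2 x y z = if x = z then derivWithin (fun s => dd1 s y) (Ioo a b) x
      else (dd1 x y - dd1 y z) / (x - z)) :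
    ∀ (lam : Fin n → ℝ) (lam0 : ℝ), (∀ i, lam i ∈ Ioo a b) → lam0 ∈ Ioo a b →
      (Matrix.of fun i j : Fin n => dd2 (lam i) (lam j) lam0).PosSemidef := by
  exact fun _ _ => stmt16_general isOpen_Ioo ordConnected_Ioo hf hK hdd1 hdd2
end
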